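/- For all n ≥ 1 and 1 ≤ k ≤ n, the number of unit Fubini rankings with n competitors having exactly k lucky cars equals k!·S_{≤2}(n,k), where S_{≤2}(n,k) is the number of partitions of an n-element set into k nonempty blocks each of size at most 2. -/

import Mathlib

/-- A Fubini ranking with `n` competitors: entries are in `[n]` (represented by `Fin n`,
where `i : Fin n` stands for the rank `i.val + 1`), and for every rank `r` occurring among
the entries, the number of indices `j` whose entry is strictly smaller than `r` equals
`r - 1` (i.e. `r.val` in the `Fin n` encoding). -/
def IsFubini {n : ℕ} (α : Fin n → Fin n) : Prop :=
  ∀ r : Fin n, (∃ i, α i = r) →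
    (Finset.univ.filter (fun j => α j < r)).card = (r : ℕ)

/-- The set of lucky cars of `α`: car `i` is lucky iff it is the first occurrence of its
value, i.e. `α j ≠ α i` for all `j < i`. -/
def luckySet {n : ℕ} (α : Fin n → Fin n) : Finset (Fin n) :=
  Finset.univ.filter (fun i => ∀ j, j < i → α j ≠ α i)

/-- The number of lucky cars of `α`. -/
def lucky {n : ℕ} (α : Fin n → Fin n) : ℕ := (luckySet α).card

instance {n : ℕ} : DecidablePred (IsFubini (n := n)) := fun α =>
  inferInstanceAs (Decidable (∀ r : Fin n, (∃ i, α i = r) →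
    (Finset.univ.filter (fun j => α j < r)).card = (r : ℕ)))

/-- `α` has every value occurring at most twice among its entries (the "unit" condition:
a unit Fubini ranking is a Fubini ranking in which at most two competitors share a rank). -/
def IsUnit2 {n : ℕ} (α : Fin n → Fin n) : Prop :=
  ∀ r : Fin n, (Finset.univ.filter (fun i => α i = r)).card ≤ 2

/-- `S_{≤2}(n,k)`: the number of partitions of an `n`-element set into `k` nonempty
blocks, each of size at most `2`. -/
noncomputable def stirlingLe2 (n k : ℕ) : ℕ :=
  Nat.card {P : Finset (Finset (Fin n)) //
    P.card = k ∧ (∀ B ∈ P, B.Nonempty ∧ B.card ≤ 2) ∧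
      ∀ i : Fin n, ∃! B : Finset (Fin n), B ∈ P ∧ i ∈ B}

open Finset Function

/-- Surjections `Fin n → Fin k` all of whose fibres have at most two elements, that is, ordered
partitions of `Fin n` into `k` blocks of size at most two. -/
abbrev SurjLe2 (n k : ℕ) : Type :=
  {f : Fin n → Fin k // Surjective f ∧ ∀ c, #{i | f i = c} ≤ 2}

/-- The partitions counted by `stirlingLe2 n k`. -/
abbrev PartitionLe2 (n k : ℕ) : Type :=
  {P : Finset (Finset (Fin n)) //
    P.card = k ∧ (∀ B ∈ P, B.Nonempty ∧ B.card ≤ 2) ∧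
      ∀ i : Fin n, ∃! B : Finset (Fin n), B ∈ P ∧ i ∈ B}

theorem lucky_eq_card_image {n : ℕ} (α : Fin n → Fin n) : lucky α = #(univ.image α) := by
  have himage : univ.image α = (luckySet α).image α := by
    ext r
    simp only [mem_image, mem_univ, true_and, luckySet, mem_filter]
    refine ⟨?_, fun ⟨i, _, hi⟩ => ⟨i, hi⟩⟩
    intro hr
    obtain ⟨i, hi, hmin⟩ := WellFounded.has_min (wellFounded_lt (α := Fin n)) {i | α i = r} hr
    exact ⟨i, fun j hj hji => hmin j (hji.trans hi) hj, hi⟩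
  rw [himage, card_image_of_injOn, lucky]
  intro i hi j hj hij
  simp only [luckySet, coe_filter, mem_univ, true_and, Set.mem_ofPred_eq] at hi hj
  rcases lt_trichotomy i j with h | h | h
  · exact absurd hij (hj i h)
  · exact h
  · exact absurd hij.symm (hi j h)

/-- The ranking in which competitor `i` is placed after all `j` with `f j < f i`. -/
def rankOf {n k : ℕ} (f : Fin n → Fin k) (i : Fin n) : Fin n :=
  ⟨#{j | f j < f i}, by
    have h : #{j | f j < f i} < #(univ : Finset (Fin n)) :=
      card_lt_card (filter_ssubset.2 ⟨i, mem_univ i, lt_irrefl _⟩)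
    simpa using h⟩

theorem rankOf_lt_rankOf {n k : ℕ} (f : Fin n → Fin k) (i j : Fin n) :
    rankOf f i < rankOf f j ↔ f i < f j := by
  have hmono : ∀ a b, f a ≤ f b → rankOf f a ≤ rankOf f b := fun a b hab =>
    Fin.mk_le_mk.2 (card_le_card (monotone_filter_right _ fun _ _ h => lt_of_lt_of_le h hab))
  refine ⟨fun h => lt_of_not_ge fun hji => (hmono j i hji).not_gt h, fun h => ?_⟩
  refine Fin.mk_lt_mk.2 (card_lt_card ((ssubset_iff_of_subset
    (monotone_filter_right _ fun _ _ h' => lt_trans h' h)).2 ⟨i, ?_, ?_⟩)) <;> simp [h]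

theorem rankOf_eq_rankOf {n k : ℕ} (f : Fin n → Fin k) (i j : Fin n) :
    rankOf f i = rankOf f j ↔ f i = f j := by
  have h₁ := rankOf_lt_rankOf f i j
  have h₂ := rankOf_lt_rankOf f j i
  constructor <;> intro h <;> apply le_antisymm <;> apply le_of_not_gt <;> grind

theorem isFubini_rankOf {n k : ℕ} (f : Fin n → Fin k) : IsFubini (rankOf f) := by
  rintro _ ⟨i, rfl⟩
  simp only [rankOf_lt_rankOf]
  rfl

theorem isUnit2_rankOf {n k : ℕ} {f : Fin n → Fin k} (hf : ∀ c, #{i | f i = c} ≤ 2) :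
    IsUnit2 (rankOf f) := by
  intro r
  by_cases hr : ∃ i, rankOf f i = r
  · obtain ⟨i, rfl⟩ := hr
    simpa only [rankOf_eq_rankOf] using hf (f i)
  · rw [filter_false_of_mem fun i _ hi => hr ⟨i, hi⟩]
    simp

theorem lucky_rankOf {n k : ℕ} {f : Fin n → Fin k} (hf : Surjective f) :
    lucky (rankOf f) = k := by
  have himage : univ.image (rankOf f) = univ.image (rankOf f ∘ surjInv hf) := by
    ext r
    simp only [mem_image, mem_univ, true_and, comp_apply]
    refine ⟨fun ⟨i, hi⟩ => ⟨f i, ?_⟩, fun ⟨c, hc⟩ => ⟨_, hc⟩⟩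
    rw [← hi, rankOf_eq_rankOf, surjInv_eq hf]
  rw [lucky_eq_card_image, himage, card_image_of_injective, card_univ, Fintype.card_fin]
  intro c d hcd
  rwa [comp_apply, comp_apply, rankOf_eq_rankOf, surjInv_eq hf, surjInv_eq hf] at hcd

/-- A surjection onto `Fin k` is determined by the weak order it induces. -/
theorem eq_of_lt_iff_lt_of_surjective {n k : ℕ} {f g : Fin n → Fin k} (hf : Surjective f)
    (hg : Surjective g) (h : ∀ i j, f i < f j ↔ g i < g j) : f = g := by
  have heq : ∀ i j, f i = f j → g i = g j := fun i j hij =>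
    le_antisymm (le_of_not_gt fun hlt => ((h j i).2 hlt).ne' hij)
      (le_of_not_gt fun hlt => ((h i j).2 hlt).ne hij)
  have hmono : StrictMono (g ∘ surjInv hf) := fun c d hcd =>
    (h _ _).1 (by rwa [surjInv_eq hf, surjInv_eq hf])
  have hcomp : ∀ i, g (surjInv hf (f i)) = g i := fun i => heq _ _ (surjInv_eq hf _)
  have hsurj : Surjective (g ∘ surjInv hf) := fun c => by
    obtain ⟨i, rfl⟩ := hg c
    exact ⟨f i, hcomp i⟩
  have hid : g ∘ surjInv hf = id :=
    (hmono.range_inj strictMono_id).1 (by rw [hsurj.range_eq, Set.range_id])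
  funext i
  rw [← hcomp i]
  exact (congrFun hid (f i)).symm

theorem exists_rankOf_eq {n k : ℕ} {α : Fin n → Fin n} (hα : IsFubini α) (hu : IsUnit2 α)
    (hk : lucky α = k) :
    ∃ f : Fin n → Fin k, (Surjective f ∧ ∀ c, #{i | f i = c} ≤ 2) ∧ rankOf f = α := by
  let e := (univ.image α).orderIsoOfFin ((lucky_eq_card_image α).symm.trans hk)
  let f : Fin n → Fin k := fun i => e.symm ⟨α i, mem_image_of_mem α (mem_univ i)⟩
  have hlt : ∀ i j, f i < f j ↔ α i < α j := fun i j => by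
    simp [f, e.symm.lt_iff_lt]
  have heq : ∀ i j, f i = f j ↔ α i = α j := fun i j => by
    simp [f, e.symm.injective.eq_iff]
  have hsurj : Surjective f := fun c => by
    obtain ⟨i, -, hi⟩ := mem_image.1 (e c).2
    exact ⟨i, by simp [f, hi]⟩
  refine ⟨f, ⟨hsurj, fun c => ?_⟩, ?_⟩
  · obtain ⟨i, rfl⟩ := hsurj c
    simpa only [heq] using hu (α i)
  · funext i
    ext
    simpa only [rankOf, hlt] using hα (α i) ⟨i, rfl⟩

theorem card_unit_fubini_eq_card_surjLe2 (n k : ℕ) :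
    Nat.card {α : Fin n → Fin n // IsFubini α ∧ IsUnit2 α ∧ lucky α = k}
      = Nat.card (SurjLe2 n k) := by
  refine (Nat.card_eq_of_bijective (fun f : SurjLe2 n k => ⟨rankOf f.1, isFubini_rankOf f.1,
    isUnit2_rankOf f.2.2, lucky_rankOf f.2.1⟩) ⟨?_, ?_⟩).symm
  · intro f g hfg
    have hrank : rankOf f.1 = rankOf g.1 := congrArg Subtype.val hfg
    refine Subtype.ext (eq_of_lt_iff_lt_of_surjective f.2.1 g.2.1 fun i j => ?_)
    rw [← rankOf_lt_rankOf, hrank, rankOf_lt_rankOf]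
  · rintro ⟨α, hα, hu, hk⟩
    obtain ⟨f, hf, rfl⟩ := exists_rankOf_eq hα hu hk
    exact ⟨⟨f, hf⟩, rfl⟩

/-- The partition of `Fin n` into the fibres of a surjection. -/
def SurjLe2.fibres {n k : ℕ} (f : SurjLe2 n k) : PartitionLe2 n k :=
  ⟨univ.image fun c => ({i | f.1 i = c} : Finset (Fin n)), by
    obtain ⟨f, hf, hle⟩ := f
    refine ⟨?_, ?_, fun i => ⟨({j | f j = f i} : Finset (Fin n)), by simp, ?_⟩⟩
    · rw [card_image_of_injective, card_univ, Fintype.card_fin]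
      intro c d hcd
      obtain ⟨i, rfl⟩ := hf c
      simpa using (Finset.ext_iff.1 hcd i).1 (by simp)
    · intro B hB
      obtain ⟨c, -, rfl⟩ := mem_image.1 hB
      obtain ⟨i, hi⟩ := hf c
      exact ⟨⟨i, by simpa using hi⟩, hle c⟩
    · rintro B ⟨hB, hi⟩
      obtain ⟨c, -, rfl⟩ := mem_image.1 hB
      obtain rfl : f i = c := by simpa using hi
      rfl⟩

theorem existsUnique_mem_labelled_block {n k : ℕ} (P : PartitionLe2 n k) (e : Fin k ≃ P.1)
    (i : Fin n) : ∃! c, i ∈ (e c : Finset (Fin n)) := by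
  obtain ⟨B, ⟨hB, hi⟩, huniq⟩ := P.2.2.2 i
  refine ⟨e.symm ⟨B, hB⟩, by simpa using hi, fun c hc => ?_⟩
  rw [Equiv.eq_symm_apply]
  exact Subtype.ext (huniq _ ⟨(e c).2, hc⟩)

theorem exists_surjLe2_of_labelling {n k : ℕ} (P : PartitionLe2 n k) (e : Fin k ≃ P.1) :
    ∃ f : SurjLe2 n k, ∀ c, (univ.filter fun i => f.1 i = c) = e c := by
  choose f hf huniq using existsUnique_mem_labelled_block P e
  have hfibre : ∀ c, (univ.filter fun i => f i = c) = e c := fun c => by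
    ext i
    simp only [mem_filter, mem_univ, true_and]
    exact ⟨fun h => h ▸ hf i, fun h => (huniq i c h).symm⟩
  refine ⟨⟨f, fun c => ?_, fun c => ?_⟩, hfibre⟩
  · obtain ⟨i, hi⟩ := (P.2.2.1 _ (e c).2).1
    exact ⟨i, (huniq i c hi).symm⟩
  · rw [hfibre]
    exact (P.2.2.1 _ (e c).2).2

/-- The labelling of the blocks of the partition into fibres of `f` by the values of `f`. -/
noncomputable def SurjLe2.labelling {n k : ℕ} (f : SurjLe2 n k) : Fin k ≃ f.fibres.1 :=
  Equiv.ofBijective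
    (fun c => ⟨({i | f.1 i = c} : Finset (Fin n)), mem_image_of_mem _ (mem_univ c)⟩) <| by
    refine ⟨fun c d hcd => ?_, fun ⟨B, hB⟩ => ?_⟩
    · obtain ⟨i, rfl⟩ := f.2.1 c
      simpa using (Finset.ext_iff.1 (congrArg Subtype.val hcd) i).1 (by simp)
    · obtain ⟨c, -, rfl⟩ := mem_image.1 hB
      exact ⟨c, rfl⟩

theorem card_surjLe2 (n k : ℕ) :
    Nat.card (SurjLe2 n k) = Nat.factorial k * stirlingLe2 n k := by
  classical
  have hbij : Bijective (fun f : SurjLe2 n k =>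
      (⟨f.fibres, f.labelling⟩ : Σ P : PartitionLe2 n k, Fin k ≃ P.1)) := by
    refine ⟨fun f g hfg => ?_, fun ⟨P, e⟩ => ?_⟩
    · have hfibre : ∀ c, (univ.filter fun i => f.1 i = c) = univ.filter fun i => g.1 i = c := fun c =>
        congrArg (fun x : Σ P : PartitionLe2 n k, Fin k ≃ P.1 => (x.2 c : Finset (Fin n))) hfg
      refine Subtype.ext (funext fun i => ?_)
      simpa [eq_comm] using (Finset.ext_iff.1 (hfibre (f.1 i)) i).1 (by simp)
    · obtain ⟨f, hf⟩ := exists_surjLe2_of_labelling P e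
      obtain rfl : f.fibres = P := by
        refine Subtype.ext (Finset.ext fun B => ?_)
        simp only [SurjLe2.fibres, hf, mem_image, mem_univ, true_and]
        refine ⟨fun ⟨c, hc⟩ => hc ▸ (e c).2, fun hB => ⟨e.symm ⟨B, hB⟩, by simp⟩⟩
      refine ⟨f, ?_⟩
      have hlabel : f.labelling = e := Equiv.ext fun c => Subtype.ext (hf c)
      rw [← hlabel]
  have hcard (P : PartitionLe2 n k) : Nat.card (Fin k ≃ P.1) = Nat.factorial k := by
    have e : Fin k ≃ P.1 := (P.1.equivFinOfCardEq P.2.1).symm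
    rw [Nat.card_eq_fintype_card, Fintype.card_equiv e, Fintype.card_fin]
  rw [Nat.card_eq_of_bijective _ hbij, Nat.card_sigma, sum_congr rfl fun P _ => hcard P,
    sum_const, card_univ, smul_eq_mul, mul_comm, stirlingLe2, Nat.card_eq_fintype_card]

/-- For `1 ≤ k ≤ n`, the number of unit Fubini rankings with `n`
competitors having exactly `k` lucky cars equals `k! · S_{≤2}(n,k)`. -/
theorem card_unit_fubini_eq_factorial_mul_stirlingLe2
    (n k : ℕ) (hn : 1 ≤ n) (hk : 1 ≤ k) (hkn : k ≤ n) :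
    Nat.card {α : Fin n → Fin n // IsFubini α ∧ IsUnit2 α ∧ lucky α = k}
      = Nat.factorial k * stirlingLe2 n k := by
  rw [card_unit_fubini_eq_card_surjLe2, card_surjLe2]
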